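/- Let N be an odd natural number with N > 1 and let r be the number of distinct prime factors of N. Then every quadratic residue z modulo N has exactly 2^r square roots in (ℤ/Nℤ)ˣ; equivalently, the squaring map on (ℤ/Nℤ)ˣ is 2^r-to-1 onto its image. -/

import Mathlib

/-!
Two square roots of `z` differ by an element of the 2-torsion subgroup, so every nonempty fibre of
squaring on `(ZMod N)ˣ` has as many elements as its kernel. By the Chinese remainder theorem
(`ZMod.equivPi`) this kernel is the product, over the primes `p ∣ N`, of the kernels of squaring on
`(ZMod (p ^ k))ˣ` with `k` the exponent of `p` in `N`. As `p` is odd, each of these groups is cyclic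
of even order `φ (p ^ k)`, so each factor has exactly two elements.
-/

/-- For an odd prime `p` and `k ≠ 0` the unit group is cyclic of even order, so exactly two of its
elements square to `1`. -/
lemma card_sq_eq_one_prime_pow {p k : ℕ} (hp : p.Prime) (hp2 : p ≠ 2) (hk : k ≠ 0) :
    Nat.card {y : (ZMod (p ^ k))ˣ // y ^ 2 = 1} = 2 := by
  have : NeZero (p ^ k) := ⟨pow_ne_zero _ hp.ne_zero⟩
  have := ZMod.isCyclic_units_of_prime_pow p hp hp2 k
  have hlt : 2 < p ^ k :=
    (lt_of_le_of_ne hp.two_le hp2.symm).trans_le (Nat.le_self_pow hk p)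
  have h := IsCyclic.card_powMonoidHom_ker (G := (ZMod (p ^ k))ˣ) 2
  rw [Nat.card_eq_fintype_card (α := (ZMod (p ^ k))ˣ), ZMod.card_units_eq_totient,
    Nat.gcd_eq_right (Nat.totient_even hlt).two_dvd] at h
  exact h

lemma card_sq_eq_one_odd {N : ℕ} (hN : Odd N) :
    Nat.card {y : (ZMod N)ˣ // y ^ 2 = 1} = 2 ^ N.primeFactors.card := by
  let e := (Units.mapEquiv (ZMod.equivPi N hN.pos.ne').toMulEquiv).trans MulEquiv.piUnits
  have h : ∀ y : (ZMod N)ˣ, y ^ 2 = 1 ↔ ∀ p, e y p ^ 2 = 1 := fun y ↦ by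
    rw [← e.injective.eq_iff, map_pow, map_one, funext_iff]
    rfl
  have h2 (p : N.primeFactors) :
      Nat.card {y : (ZMod ((p : ℕ) ^ N.factorization p))ˣ // y ^ 2 = 1} = 2 := by
    have hp := Nat.prime_of_mem_primeFactors p.2
    have hd := Nat.dvd_of_mem_primeFactors p.2
    refine card_sq_eq_one_prime_pow hp ?_ (hp.factorization_pos_of_dvd hN.pos.ne' hd).ne'
    intro h
    exact hN.not_two_dvd_nat (h ▸ hd)
  rw [Nat.card_congr ((e.toEquiv.subtypeEquiv h).trans (Equiv.subtypePiEquivPi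
    (p := fun (p : N.primeFactors) (y : (ZMod ((p : ℕ) ^ N.factorization p))ˣ) ↦ y ^ 2 = 1))), Nat.card_pi,
    Finset.prod_congr rfl fun p _ ↦ h2 p]
  simp

/-- For odd `N > 1` with `r` distinct prime factors, every quadratic residue modulo
`N` has exactly `2 ^ r` square roots in `(ZMod N)ˣ`. -/
theorem card_sqrts_odd (N : ℕ) (hN : Odd N) (h1 : 1 < N) (z : (ZMod N)ˣ)
    (hz : ∃ x : (ZMod N)ˣ, z = x ^ 2) :
    {x : (ZMod N)ˣ | x ^ 2 = z}.ncard = 2 ^ N.primeFactors.card := by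
  obtain ⟨a, rfl⟩ := hz
  rw [← card_sq_eq_one_odd hN]
  exact Nat.card_congr ((powMonoidHom 2 : (ZMod N)ˣ →* (ZMod N)ˣ).fiberEquivKer a)
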